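/- Let n be a positive integer, p a prime with p ≡ 1 (mod n), and let X_p be the p-adic solenoid, i.e., the Pontryagin dual of the discrete additive group ℤ[1/p] of p-adic fractions. Then for every normalized U(1)-valued 3-cocycle ω on ℤ/nℤ there exists an ω-anomalous action of ℤ/nℤ on C(X_p): an action of ℤ/nℤ on X_p by homeomorphisms g ↦ φ_g together with continuous functions μ(g,h) : X_p → U(1), with μ(g,h) constantly 1 whenever g or h is zero, satisfying ω(g,h,k)·μ(g+h,k)(x)·μ(g,h)(x) = μ(g,h+k)(x)·μ(h,k)(φ_g⁻¹(x)) for all g,h,k ∈ ℤ/nℤ and x ∈ X_p. -/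

import Mathlib

/-!
Put `C(g, m) = ω(g,0,1) ω(g,1,1) ⋯ ω(g,m-1,1)`. Telescoping the cocycle equation along the
generator `1` shows that `ω(g, h, k)` is the coboundary of `C`, except that `C(g, m)` is not
periodic in `m`: moving `m` once around `ℤ/nℤ` multiplies `C(g, m)` by `s(g) = C(g, n)`, and
`s` is a character of `ℤ/nℤ`. A function `u : X → U(1)` with `u ∘ φ_g⁻¹ = s(g) u` absorbs this
defect, since one may correct `C` by one power of `u` for each carry in the addition of `ℤ/nℤ`.
On the dual of a group `A` with a surjection `ρ : A → ℤ/nℤ`, such a `u` is evaluation at a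
point of `ρ⁻¹(1)`, when `g` acts as translation by the inverse of the character
`q ↦ s(g ρ(q))`. For `A = ℤ[1/p]` the reduction `ρ` exists because `p` is a unit modulo `n`.
-/

/-- The additive group `ℤ[1/p]` of `p`-adic fractions, written multiplicatively and regarded
as a discrete topological group. -/
abbrev PadicFractions (p : ℕ) : Type :=
  Multiplicative (Localization.Away (p : ℤ))

instance (p : ℕ) : TopologicalSpace (PadicFractions p) := ⊥

instance (p : ℕ) : DiscreteTopology (PadicFractions p) := ⟨rfl⟩

/-- The `p`-adic solenoid: the Pontryagin dual of the discrete group `ℤ[1/p]` of `p`-adic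
fractions. -/
abbrev PadicSolenoid (p : ℕ) : Type :=
  PontryaginDual (PadicFractions p)

/-- A normalized 3-cocycle on the additive monoid `G`, with values in `M` carrying the trivial
action. -/
structure IsNormalizedMulCocycle₃ {G M : Type*} [AddMonoid G] [CommMonoid M]
    (ω : G → G → G → M) : Prop where
  eq_one : ∀ g h k, g = 0 ∨ h = 0 ∨ k = 0 → ω g h k = 1
  cocycle : ∀ g₁ g₂ g₃ g₄,
    ω (g₁ + g₂) g₃ g₄ * ω g₁ g₂ (g₃ + g₄) = ω g₂ g₃ g₄ * ω g₁ (g₂ + g₃) g₄ * ω g₁ g₂ g₃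

/-- An `ω`-anomalous action of `G` on `C(X)`, in its Gelfand dual form: an action `φ` of `G` on `X`
by homeomorphisms and normalized continuous functions `μ g h` whose coboundary, twisted by `φ`, is
`ω`. The paper has `M = U(1)`. -/
structure AnomalousAction {G M : Type*} [AddMonoid G] [CommMonoid M] [TopologicalSpace M]
    (X : Type*) [TopologicalSpace X] (ω : G → G → G → M) where
  φ : G → (X ≃ₜ X)
  μ : G → G → C(X, M)
  φ_zero : φ 0 = Homeomorph.refl X
  φ_add : ∀ g h x, φ (g + h) x = φ g (φ h x)
  μ_eq_one : ∀ g h, g = 0 ∨ h = 0 → μ g h = 1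
  anomaly : ∀ g h k x,
    ω g h k * μ (g + h) k x * μ g h x = μ g (h + k) x * μ h k ((φ g).symm x)

section RowProd

variable {G M : Type*} [AddMonoidWithOne G] [CommMonoid M] {ω : G → G → G → M}

/-- The product `ω(g,0,1) ω(g,1,1) ⋯ ω(g,m-1,1)` of the cocycle `ω` along the first `m` multiples
of `1`, as a function of the natural number `m` since it need not be periodic. -/
def rowProd (ω : G → G → G → M) (g : G) (m : ℕ) : M :=
  ∏ j ∈ Finset.range m, ω g j 1

theorem rowProd_succ (ω : G → G → G → M) (g : G) (m : ℕ) :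
    rowProd ω g (m + 1) = rowProd ω g m * ω g m 1 :=
  Finset.prod_range_succ _ _

theorem rowProd_add_mul {n : ℕ} (hn : (n : G) = 0) (ω : G → G → G → M) (g : G) (m q : ℕ) :
    rowProd ω g (m + n * q) = rowProd ω g m * rowProd ω g n ^ q := by
  induction q with
  | zero => simp
  | succ q ih =>
    have shift : rowProd ω g (n + (m + n * q)) = rowProd ω g n * rowProd ω g (m + n * q) := by
      simp [rowProd, Finset.prod_range_add, hn]
    rw [show m + n * (q + 1) = n + (m + n * q) by ring, shift, ih, pow_succ']
    exact mul_left_comm ..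

namespace IsNormalizedMulCocycle₃

theorem rowProd_zero_left (hω : IsNormalizedMulCocycle₃ ω) (m : ℕ) : rowProd ω 0 m = 1 :=
  Finset.prod_eq_one fun _ _ ↦ hω.eq_one _ _ _ (.inl rfl)

theorem mul_rowProd_mul_rowProd (hω : IsNormalizedMulCocycle₃ ω) (g : G) (h k : ℕ) :
    ω g h k * rowProd ω (g + h) k * rowProd ω g h = rowProd ω h k * rowProd ω g (h + k) := by
  induction k with
  | zero => simp [rowProd, hω.eq_one]
  | succ k ih =>
    have cocycle : ω (g + h) k 1 * ω g h (k + 1 : ℕ) = ω h k 1 * ω g (h + k : ℕ) 1 * ω g h k := by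
      simpa using hω.cocycle g h k 1
    calc ω g h (k + 1 : ℕ) * rowProd ω (g + h) (k + 1) * rowProd ω g h
        = (ω (g + h) k 1 * ω g h (k + 1 : ℕ)) * (rowProd ω (g + h) k * rowProd ω g h) := by
          rw [rowProd_succ]; ac_rfl
      _ = (ω h k 1 * ω g (h + k : ℕ) 1) *
            (ω g h k * rowProd ω (g + h) k * rowProd ω g h) := by
          rw [cocycle]; ac_rfl
      _ = rowProd ω h (k + 1) * rowProd ω g (h + (k + 1)) := by
          rw [ih, rowProd_succ, ← add_assoc, rowProd_succ]; ac_rfl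

end IsNormalizedMulCocycle₃

end RowProd

section Carry

variable {n : ℕ}

/-- The carry in the addition of the representatives of `g` and `h` in `{0, …, n - 1}`: the
2-cocycle of the extension of `ℤ/nℤ` by `nℤ` given by `ℤ`. -/
def carry (g h : ZMod n) : ℕ :=
  (g.val + h.val) / n

variable [NeZero n]

theorem val_add_add_mul_carry (g h : ZMod n) :
    (g + h).val + n * carry g h = g.val + h.val := by
  rw [ZMod.val_add, carry, Nat.mod_add_div]

theorem carry_zero_left (h : ZMod n) : carry 0 h = 0 := by
  simp [carry, Nat.div_eq_of_lt h.val_lt]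

theorem carry_zero_right (g : ZMod n) : carry g 0 = 0 := by
  simp [carry, Nat.div_eq_of_lt g.val_lt]

theorem carry_add_left_add_carry (g h k : ZMod n) :
    carry (g + h) k + carry g h = carry g (h + k) + carry h k := by
  refine Nat.eq_of_mul_eq_mul_left (NeZero.pos n) ?_
  have sum_left := val_add_add_mul_carry (g + h) k
  have sum_right := val_add_add_mul_carry g (h + k)
  rw [← add_assoc] at sum_right
  linarith [val_add_add_mul_carry g h, val_add_add_mul_carry h k]

end Carry

section CarryProd

variable {n : ℕ} [NeZero n] {M : Type*}

section CommMonoid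

variable [CommMonoid M] {ω : ZMod n → ZMod n → ZMod n → M}

theorem rowProd_val_add_val (ω : ZMod n → ZMod n → ZMod n → M) (g h k : ZMod n) :
    rowProd ω g (h.val + k.val) = rowProd ω g (h + k).val * rowProd ω g n ^ carry h k := by
  rw [← val_add_add_mul_carry, rowProd_add_mul (ZMod.natCast_self n)]

/-- The product `rowProd ω g h` over the representative of `h`, corrected by a factor `z` for each
carry. As a function of `g` and `h` it plays the role of `μ g h` at a point where `u = z`. -/
def carryProd (ω : ZMod n → ZMod n → ZMod n → M) (z : M) (g h : ZMod n) : M :=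
  rowProd ω g h.val * z ^ carry g h

theorem IsNormalizedMulCocycle₃.carryProd_eq_one (hω : IsNormalizedMulCocycle₃ ω) (z : M)
    {g h : ZMod n} (hgh : g = 0 ∨ h = 0) : carryProd ω z g h = 1 := by
  rcases hgh with rfl | rfl
  · simp [carryProd, carry_zero_left, hω.rowProd_zero_left]
  · simp [carryProd, carry_zero_right, rowProd]

end CommMonoid

namespace IsNormalizedMulCocycle₃

variable [CancelCommMonoid M] {ω : ZMod n → ZMod n → ZMod n → M}

/-- The character `g ↦ ω(g,0,1) ω(g,1,1) ⋯ ω(g,n-1,1)` of `ℤ/nℤ`, which measures the failure of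
`rowProd ω g` to be `n`-periodic. -/
def char (hω : IsNormalizedMulCocycle₃ ω) : AddChar (ZMod n) M where
  toFun g := rowProd ω g n
  map_zero_eq_one' := hω.rowProd_zero_left n
  map_add_eq_mul' g h := by
    have telescoped := hω.mul_rowProd_mul_rowProd g h.val n
    have wrapped := rowProd_add_mul (ZMod.natCast_self n) ω g h.val 1
    simp only [ZMod.natCast_zmod_val, CharP.cast_eq_zero, mul_one, pow_one] at telescoped wrapped
    rw [hω.eq_one g h 0 (by simp), one_mul, wrapped] at telescoped
    refine mul_right_cancel (b := rowProd ω g h.val) (telescoped.trans ?_)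
    ac_rfl

theorem char_apply (hω : IsNormalizedMulCocycle₃ ω) (g : ZMod n) : hω.char g = rowProd ω g n :=
  rfl

theorem mul_carryProd_mul_carryProd (hω : IsNormalizedMulCocycle₃ ω) (z : M) (g h k : ZMod n) :
    ω g h k * carryProd ω z (g + h) k * carryProd ω z g h =
      carryProd ω z g (h + k) * carryProd ω (hω.char g * z) h k := by
  have telescoped := hω.mul_rowProd_mul_rowProd g h.val k.val
  simp only [ZMod.natCast_zmod_val] at telescoped
  calc ω g h k * carryProd ω z (g + h) k * carryProd ω z g h
      = ω g h k * rowProd ω (g + h) k.val * rowProd ω g h.val *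
          z ^ (carry (g + h) k + carry g h) := by
        rw [carryProd, carryProd, pow_add]; ac_rfl
    _ = rowProd ω h k.val * (rowProd ω g (h + k).val * hω.char g ^ carry h k) *
          z ^ (carry g (h + k) + carry h k) := by
        rw [telescoped, rowProd_val_add_val, carry_add_left_add_carry, char_apply]
    _ = carryProd ω z g (h + k) * carryProd ω (hω.char g * z) h k := by
        simp only [carryProd, pow_add, mul_pow, mul_left_comm, mul_assoc]

end IsNormalizedMulCocycle₃

end CarryProd

section DualMulShift

variable {R A : Type*} [Ring R] [TopologicalSpace R] [ContinuousMul R] [Monoid A]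
  [TopologicalSpace A]

/-- The characters `q ↦ ψ (r * ρ q)` of `A`, as a homomorphism from `R` to the dual of `A`. -/
noncomputable def dualMulShift (ψ : AddChar R Circle) (hψ : Continuous ψ)
    (ρ : A →ₜ* Multiplicative R) : AddChar R (PontryaginDual A) where
  toFun r :=
    { toMonoidHom := (ψ.mulShift r).toMonoidHom.comp ρ.toMonoidHom
      continuous_toFun :=
        hψ.comp (continuous_const.mul (continuous_toAdd.comp ρ.continuous_toFun)) }
  map_zero_eq_one' := PontryaginDual.ext fun q ↦
    (congrArg ψ (zero_mul (ρ q).toAdd)).trans ψ.map_zero_eq_one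
  map_add_eq_mul' r s := PontryaginDual.ext fun q ↦
    (congrArg ψ (add_mul r s (ρ q).toAdd)).trans (ψ.map_add_eq_mul _ _)

theorem dualMulShift_apply (ψ : AddChar R Circle) (hψ : Continuous ψ)
    (ρ : A →ₜ* Multiplicative R) (r : R) (q : A) :
    dualMulShift ψ hψ ρ r q = ψ (r * (ρ q).toAdd) :=
  rfl

end DualMulShift

namespace IsNormalizedMulCocycle₃

variable {n : ℕ} [NeZero n]

section TopologicalTarget

variable {M : Type*} [CancelCommMonoid M] [TopologicalSpace M] [ContinuousMul M]
  {ω : ZMod n → ZMod n → ZMod n → M}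

/-- The `ω`-anomalous action extending an action `φ` by homeomorphisms, given a function `u` on
which `φ` acts through the character of `ω`. -/
def anomalousActionOfEquivariant (hω : IsNormalizedMulCocycle₃ ω) {X : Type*} [TopologicalSpace X]
    (φ : ZMod n → (X ≃ₜ X)) (φ_zero : φ 0 = Homeomorph.refl X)
    (φ_add : ∀ g h x, φ (g + h) x = φ g (φ h x))
    (u : C(X, M)) (hu : ∀ g x, u ((φ g).symm x) = hω.char g * u x) : AnomalousAction X ω where
  φ := φ
  μ g h := ⟨fun x ↦ carryProd ω (u x) g h, by unfold carryProd; fun_prop⟩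
  φ_zero := φ_zero
  φ_add := φ_add
  μ_eq_one g h hgh := ContinuousMap.ext fun x ↦ hω.carryProd_eq_one (u x) hgh
  anomaly g h k x := by
    simpa only [ContinuousMap.coe_mk, hu] using hω.mul_carryProd_mul_carryProd (u x) g h k

/-- The `ω`-anomalous action on a topological group `K` in which `g` acts as translation by
`(χ g)⁻¹`, given a character `u` of `K` that restricts along `χ` to the character of `ω`. -/
def anomalousActionOfTranslation (hω : IsNormalizedMulCocycle₃ ω) {K : Type*} [Group K]
    [TopologicalSpace K] [ContinuousMul K] (χ : AddChar (ZMod n) K) (u : K →ₜ* M)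
    (hu : ∀ g, u (χ g) = hω.char g) : AnomalousAction K ω :=
  hω.anomalousActionOfEquivariant (fun g ↦ (Homeomorph.mulLeft (χ g)).symm)
    (by ext x; simp [Homeomorph.mulLeft_symm])
    (fun g h x ↦ by
      simp [Homeomorph.mulLeft_symm, add_comm g h, AddChar.map_add_eq_mul, mul_assoc])
    u (fun g x ↦ by simp [hu])

end TopologicalTarget

variable {ω : ZMod n → ZMod n → ZMod n → Circle}

theorem nonempty_anomalousAction_pontryaginDual (hω : IsNormalizedMulCocycle₃ ω)
    {A : Type*} [Monoid A] [TopologicalSpace A] (ρ : A →ₜ* Multiplicative (ZMod n))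
    (hρ : Function.Surjective ρ) : Nonempty (AnomalousAction (PontryaginDual A) ω) := by
  obtain ⟨a, ha⟩ := hρ (.ofAdd 1)
  let χ := dualMulShift hω.char continuous_of_discreteTopology ρ
  let evalAt : PontryaginDual A →ₜ* Circle :=
    { toFun x := x a
      map_one' := rfl
      map_mul' _ _ := rfl
      continuous_toFun := continuous_eval_const (F := A →ₜ* Circle) a }
  have evalAt_χ (g : ZMod n) : evalAt (χ g) = hω.char g := by
    change χ g a = hω.char g
    simp [χ, dualMulShift_apply, ha]
  exact ⟨hω.anomalousActionOfTranslation χ evalAt evalAt_χ⟩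

end IsNormalizedMulCocycle₃

theorem anomalous_action_on_solenoid_general {n p : ℕ} [NeZero n] (hpn : p.Coprime n)
    {ω : ZMod n → ZMod n → ZMod n → Circle} (hω : IsNormalizedMulCocycle₃ ω) :
    Nonempty (AnomalousAction (PadicSolenoid p) ω) := by
  have isUnit_p : IsUnit (Int.castRingHom (ZMod n) p) := by
    simpa using (ZMod.isUnit_iff_coprime p n).2 hpn
  let reduction : Localization.Away (p : ℤ) →+* ZMod n := IsLocalization.Away.lift (p : ℤ) isUnit_p
  exact hω.nonempty_anomalousAction_pontryaginDual
    ⟨reduction.toAddMonoidHom.toMultiplicative, continuous_of_discreteTopology⟩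
    (ZMod.ringHom_surjective reduction)

/-- **Statement 13** (Section 4.3 of the paper).  For `p ≡ 1 (mod n)` prime, every normalized
`U(1)`-valued 3-cocycle `ω` on `ℤ/nℤ` is realized by an `ω`-anomalous action of `ℤ/nℤ` on
`C(X_p)`, where `X_p` is the `p`-adic solenoid: there are an action of `ℤ/nℤ` on `X_p` by
homeomorphisms `g ↦ φ g` and normalized continuous functions `μ g h : X_p → U(1)` satisfying
the anomalous cocycle equation. -/
theorem anomalous_action_on_solenoid
    (n : ℕ) (hn : 0 < n) (p : ℕ) (hp : p.Prime) (hpn : (p : ZMod n) = 1)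
    (ω : ZMod n → ZMod n → ZMod n → Circle)
    (hω_norm : ∀ g h k, g = 0 ∨ h = 0 ∨ k = 0 → ω g h k = 1)
    (hω_coc : ∀ g₁ g₂ g₃ g₄,
      ω (g₁ + g₂) g₃ g₄ * ω g₁ g₂ (g₃ + g₄)
        = ω g₂ g₃ g₄ * ω g₁ (g₂ + g₃) g₄ * ω g₁ g₂ g₃) :
    ∃ (φ : ZMod n → (PadicSolenoid p ≃ₜ PadicSolenoid p))
      (μ : ZMod n → ZMod n → C(PadicSolenoid p, Circle)),
      φ 0 = Homeomorph.refl (PadicSolenoid p) ∧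
      (∀ g h x, φ (g + h) x = φ g (φ h x)) ∧
      (∀ g h, g = 0 ∨ h = 0 → μ g h = 1) ∧
      (∀ g h k x,
        ω g h k * μ (g + h) k x * μ g h x = μ g (h + k) x * μ h k ((φ g).symm x)) := by
  have : NeZero n := ⟨hn.ne'⟩
  have coprime : p.Coprime n := (ZMod.isUnit_iff_coprime p n).1 (hpn ▸ isUnit_one)
  obtain ⟨α⟩ := anomalous_action_on_solenoid_general coprime ⟨hω_norm, hω_coc⟩
  exact ⟨α.φ, α.μ, α.φ_zero, α.φ_add, α.μ_eq_one, α.anomaly⟩
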